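/- Let S and A be nonempty finite types, P : S → A → PMF S a transition kernel, ρ0 a probability distribution on S, and γ ∈ [0,1). Let R : S × A → ℝ be a reward function, π and π' policies with π(a|s) > 0 for all s, a, and f : S → ℝ any function. Define T_{π,f}(π') = Σ_s d^π(s) Σ_a π(a|s) Σ_{s'} P(s'|s,a) (π'(a|s)/π(a|s) − 1)(R(s,a) + γ f(s') − f(s)) and ε_f^{π'} = max_s |Σ_a π'(a|s) Σ_{s'} P(s'|s,a) (R(s,a) + γ f(s') − f(s))|. Then J_R(π') − J_R(π) ≥ (1/(1−γ)) (T_{π,f}(π') − 2 ε_f^{π'} D_TV(d^{π'}‖d^π)), where D_TV(d^{π'}‖d^π) = (1/2) Σ_s |d^{π'}(s) − d^π(s)|. -/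

import Mathlib

open scoped BigOperators

section MDPdefs

variable {S A : Type*} [Fintype S] [Fintype A]

/-- The state-marginal distribution at time `t` under policy `π`:
`ρ_0 = ρ0` and `ρ_{t+1}(s') = ∑_s ∑_a ρ_t(s) π(a|s) P(s'|s,a)`. -/
noncomputable def stateMarginal (P : S → A → PMF S) (ρ0 : PMF S) (π : S → PMF A) :
    ℕ → S → ℝ
  | 0, s => (ρ0 s).toReal
  | t + 1, s' => ∑ s : S, ∑ a : A,
      stateMarginal P ρ0 π t s * (π s a).toReal * (P s a s').toReal

/-- The discounted state visitation distribution `d^π(s) = (1-γ) ∑_t γ^t ρ_t^π(s)`. -/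
noncomputable def dVisit (P : S → A → PMF S) (ρ0 : PMF S) (γ : ℝ) (π : S → PMF A)
    (s : S) : ℝ :=
  (1 - γ) * ∑' t : ℕ, γ ^ t * stateMarginal P ρ0 π t s

/-- The discounted return `J_R(π) = ∑_t γ^t ∑_s ∑_a ρ_t^π(s) π(a|s) R(s,a)`. -/
noncomputable def Jret (P : S → A → PMF S) (ρ0 : PMF S) (γ : ℝ) (π : S → PMF A)
    (R : S → A → ℝ) : ℝ :=
  ∑' t : ℕ, γ ^ t * ∑ s : S, ∑ a : A,
      stateMarginal P ρ0 π t s * (π s a).toReal * R s a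

/-- Total variational divergence between the action distributions of two policies at `s`. -/
noncomputable def dTV (π' π : S → PMF A) (s : S) : ℝ :=
  (1 / 2) * ∑ a : A, |(π' s a).toReal - (π s a).toReal|

/-- Value function of `π` with reward `R`: expected discounted return started at `s`. -/
noncomputable def Vval (P : S → A → PMF S) (γ : ℝ) (π : S → PMF A) (R : S → A → ℝ)
    (s : S) : ℝ :=
  Jret P (PMF.pure s) γ π R

/-- State-action value function `Q^π_R(s,a) = R(s,a) + γ ∑_{s'} P(s'|s,a) V^π_R(s')`. -/
noncomputable def Qval (P : S → A → PMF S) (γ : ℝ) (π : S → PMF A) (R : S → A → ℝ)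
    (s : S) (a : A) : ℝ :=
  R s a + γ * ∑ s' : S, (P s a s').toReal * Vval P γ π R s'

/-- Advantage function `A^π_R(s,a) = Q^π_R(s,a) - V^π_R(s)`. -/
noncomputable def Aadv (P : S → A → PMF S) (γ : ℝ) (π : S → PMF A) (R : S → A → ℝ)
    (s : S) (a : A) : ℝ :=
  Qval P γ π R s a - Vval P γ π R s

/-- Kullback–Leibler divergence between the action distributions at state `s`. -/
noncomputable def dKL (π' π : S → PMF A) (s : S) : ℝ :=
  ∑ a : A, (π' s a).toReal * Real.log ((π' s a).toReal / (π s a).toReal)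

end MDPdefs

/-!
For any `f`, the Bellman flow equation for `d^π` gives
`∑_s d^π(s) δ^π(s) = (1 - γ) (J_R(π) - ∑_s ρ0(s) f(s))`, where `δ^π` is the Bellman residual of `f`
under `π`. The right-hand side depends on `f` only through a term common to all policies, so
`(1 - γ) (J_R(π') - J_R(π)) = ∑_s d^π (δ^π' - δ^π) + ∑_s (d^π' - d^π) δ^π'`.
The first sum is `T_{π,f}(π')` by importance sampling; Hölder's inequality bounds the second.
-/

theorem sum_toReal_pmf {α : Type*} [Fintype α] (p : PMF α) : ∑ a, (p a).toReal = 1 := by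
  rw [← ENNReal.toReal_sum fun a _ => p.apply_ne_top a, ← tsum_fintype (L := .unconditional α),
    p.tsum_coe, ENNReal.toReal_one]

theorem abs_sum_mul_le_iSup_abs_mul_sum_abs {ι : Type*} [Fintype ι] (w g : ι → ℝ) :
    |∑ i, w i * g i| ≤ (⨆ i, |g i|) * ∑ i, |w i| :=
  calc |∑ i, w i * g i| ≤ ∑ i, |w i * g i| := Finset.abs_sum_le_sum_abs _ _
    _ ≤ ∑ i, (⨆ j, |g j|) * |w i| := Finset.sum_le_sum fun i _ => by
        rw [abs_mul, mul_comm]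
        gcongr
        exact le_ciSup (f := fun j => |g j|) (Set.finite_range _).bddAbove i
    _ = (⨆ i, |g i|) * ∑ i, |w i| := (Finset.mul_sum ..).symm

section PerformanceDifference

variable {S A : Type*} [Fintype S] [Fintype A]

/-- The Markov operator of the state chain under the policy `π`: the expectation of `f` at the
successor of `s`. -/
noncomputable def transitionOp (P : S → A → PMF S) (π : S → PMF A) (f : S → ℝ) (s : S) : ℝ :=
  ∑ a, (π s a).toReal * ∑ s', (P s a s').toReal * f s'

/-- The Bellman residual of `f` at `s` under the policy `π`: the expected temporal-difference error
`R(s,a) + γ f(s') - f(s)`. -/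
noncomputable def bellmanResidual (P : S → A → PMF S) (γ : ℝ) (R : S → A → ℝ) (f : S → ℝ)
    (π : S → PMF A) (s : S) : ℝ :=
  ∑ a, (π s a).toReal * ∑ s', (P s a s').toReal * (R s a + γ * f s' - f s)

/-- The surrogate objective `T_{π,f}(π')`: the importance-weighted temporal-difference error of `f`
over states and actions drawn from `π`. Where `π(a|s) = 0` the ratio `π'(a|s) / π(a|s)` is a junk
value, but it carries weight `π(a|s)`. -/
noncomputable def surrogateGain (P : S → A → PMF S) (ρ0 : PMF S) (γ : ℝ) (R : S → A → ℝ)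
    (f : S → ℝ) (π π' : S → PMF A) : ℝ :=
  ∑ s, dVisit P ρ0 γ π s * ∑ a, (π s a).toReal * ∑ s', (P s a s').toReal *
    (((π' s a).toReal / (π s a).toReal - 1) * (R s a + γ * f s' - f s))

variable (P : S → A → PMF S) (ρ0 : PMF S) (π : S → PMF A)

theorem transitionOp_const (c : ℝ) (s : S) : transitionOp P π (fun _ => c) s = c := by
  simp only [transitionOp, ← Finset.sum_mul, sum_toReal_pmf, one_mul]

theorem bellmanResidual_eq_add_transitionOp_sub (γ : ℝ) (R : S → A → ℝ) (f : S → ℝ) (s : S) :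
    bellmanResidual P γ R f π s =
      ∑ a, (π s a).toReal * R s a + γ * transitionOp P π f s - f s := by
  simp only [bellmanResidual, transitionOp, mul_sub, mul_add, Finset.sum_sub_distrib,
    Finset.sum_add_distrib, ← Finset.sum_mul, sum_toReal_pmf, one_mul, mul_left_comm _ γ,
    ← Finset.mul_sum]

theorem sum_stateMarginal_succ_mul (t : ℕ) (f : S → ℝ) :
    ∑ s, stateMarginal P ρ0 π (t + 1) s * f s =
      ∑ s, stateMarginal P ρ0 π t s * transitionOp P π f s := by
  simp only [stateMarginal, transitionOp, Finset.sum_mul, Finset.mul_sum]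
  rw [Finset.sum_comm]
  refine Finset.sum_congr rfl fun s _ => ?_
  rw [Finset.sum_comm]
  simp only [mul_assoc]

theorem stateMarginal_nonneg (t : ℕ) (s : S) : 0 ≤ stateMarginal P ρ0 π t s := by
  induction t generalizing s with
  | zero => exact ENNReal.toReal_nonneg
  | succ t ih =>
    exact Finset.sum_nonneg fun x _ => Finset.sum_nonneg fun a _ =>
      mul_nonneg (mul_nonneg (ih x) ENNReal.toReal_nonneg) ENNReal.toReal_nonneg

theorem sum_stateMarginal (t : ℕ) : ∑ s, stateMarginal P ρ0 π t s = 1 := by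
  induction t with
  | zero => exact sum_toReal_pmf ρ0
  | succ t ih =>
    simpa only [transitionOp_const, mul_one, ih] using
      sum_stateMarginal_succ_mul P ρ0 π t fun _ => 1

theorem stateMarginal_le_one (t : ℕ) (s : S) : stateMarginal P ρ0 π t s ≤ 1 :=
  sum_stateMarginal P ρ0 π t ▸
    Finset.single_le_sum (fun x _ => stateMarginal_nonneg P ρ0 π t x) (Finset.mem_univ s)

theorem surrogateGain_eq_sum_dVisit_mul_sub (γ : ℝ) (R : S → A → ℝ) (f : S → ℝ)
    {π π' : S → PMF A} (hac : ∀ s a, π s a = 0 → π' s a = 0) :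
    surrogateGain P ρ0 γ R f π π' =
      ∑ s, dVisit P ρ0 γ π s * (bellmanResidual P γ R f π' s - bellmanResidual P γ R f π s) := by
  have reweight (s : S) (a : A) :
      (π s a).toReal * ((π' s a).toReal / (π s a).toReal - 1) =
        (π' s a).toReal - (π s a).toReal := by
    rw [mul_sub, mul_one, mul_div_cancel_of_imp']
    intro h
    rw [hac s a (((ENNReal.toReal_eq_zero_iff _).1 h).resolve_right ((π s).apply_ne_top a)),
      ENNReal.toReal_zero]
  simp only [surrogateGain, bellmanResidual, ← Finset.sum_sub_distrib, ← sub_mul, ← reweight]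
  refine Finset.sum_congr rfl fun s _ => congrArg _ (Finset.sum_congr rfl fun a _ => ?_)
  simp only [mul_assoc, Finset.mul_sum, mul_left_comm (P s a _).toReal]

variable {γ : ℝ}

theorem summable_discounted_stateMarginal (hγ : |γ| < 1) (s : S) :
    Summable fun t : ℕ => γ ^ t * stateMarginal P ρ0 π t s := by
  refine .of_norm_bounded (summable_geometric_of_lt_one (abs_nonneg γ) hγ) fun t => ?_
  rw [Real.norm_eq_abs, abs_mul, abs_pow, abs_of_nonneg (stateMarginal_nonneg P ρ0 π t s)]
  exact mul_le_of_le_one_right (by positivity) (stateMarginal_le_one P ρ0 π t s)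

theorem hasSum_dVisit_mul (hγ : |γ| < 1) (g : S → ℝ) :
    HasSum (fun t : ℕ => (1 - γ) * (γ ^ t * ∑ s, stateMarginal P ρ0 π t s * g s))
      (∑ s, dVisit P ρ0 γ π s * g s) := by
  have hasSum_state (s : S) :
      HasSum (fun t : ℕ => (1 - γ) * (γ ^ t * stateMarginal P ρ0 π t s) * g s)
        (dVisit P ρ0 γ π s * g s) :=
    ((summable_discounted_stateMarginal P ρ0 π hγ s).hasSum.mul_left (1 - γ)).mul_right (g s)
  simpa only [Finset.mul_sum, mul_assoc] using hasSum_sum fun s _ => hasSum_state s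

theorem sum_dVisit_mul_reward (hγ : |γ| < 1) (R : S → A → ℝ) :
    ∑ s, dVisit P ρ0 γ π s * ∑ a, (π s a).toReal * R s a = (1 - γ) * Jret P ρ0 γ π R := by
  rw [← (hasSum_dVisit_mul P ρ0 π hγ _).tsum_eq, tsum_mul_left, Jret]
  simp only [Finset.mul_sum, mul_assoc]

theorem sum_dVisit_mul_eq_add_transitionOp (hγ : |γ| < 1) (f : S → ℝ) :
    ∑ s, dVisit P ρ0 γ π s * f s =
      (1 - γ) * ∑ s, (ρ0 s).toReal * f s +
        γ * ∑ s, dVisit P ρ0 γ π s * transitionOp P π f s := by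
  have hasSum_f := hasSum_dVisit_mul P ρ0 π hγ f
  have hasSum_next := (hasSum_dVisit_mul P ρ0 π hγ (transitionOp P π f)).mul_left γ
  rw [← hasSum_f.tsum_eq, hasSum_f.summable.tsum_eq_zero_add, ← hasSum_next.tsum_eq]
  congr 1
  · simp only [pow_zero, one_mul, stateMarginal]
  · refine tsum_congr fun t => ?_
    rw [sum_stateMarginal_succ_mul]
    ring

theorem sum_dVisit_mul_bellmanResidual (hγ : |γ| < 1) (R : S → A → ℝ) (f : S → ℝ) :
    ∑ s, dVisit P ρ0 γ π s * bellmanResidual P γ R f π s =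
      (1 - γ) * (Jret P ρ0 γ π R - ∑ s, (ρ0 s).toReal * f s) := by
  simp only [bellmanResidual_eq_add_transitionOp_sub, mul_sub, mul_add, Finset.sum_sub_distrib,
    Finset.sum_add_distrib, mul_left_comm _ γ, ← Finset.mul_sum]
  rw [sum_dVisit_mul_reward P ρ0 π hγ, sum_dVisit_mul_eq_add_transitionOp P ρ0 π hγ f]
  ring

theorem one_sub_mul_Jret_sub_Jret (hγ : |γ| < 1) (R : S → A → ℝ) {π π' : S → PMF A}
    (hac : ∀ s a, π s a = 0 → π' s a = 0) (f : S → ℝ) :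
    (1 - γ) * (Jret P ρ0 γ π' R - Jret P ρ0 γ π R) =
      surrogateGain P ρ0 γ R f π π' +
        ∑ s, (dVisit P ρ0 γ π' s - dVisit P ρ0 γ π s) * bellmanResidual P γ R f π' s := by
  rw [surrogateGain_eq_sum_dVisit_mul_sub P ρ0 γ R f hac]
  simp only [mul_sub, sub_mul, Finset.sum_sub_distrib, sum_dVisit_mul_bellmanResidual P ρ0 _ hγ]
  ring

end PerformanceDifference

theorem tace_appendix_lemma_three_lower_general
    {S A : Type*} [Fintype S] [Fintype A]
    (P : S → A → PMF S) (ρ0 : PMF S) {γ : ℝ} (hγ : |γ| < 1)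
    (R : S → A → ℝ) (π π' : S → PMF A) (hac : ∀ s a, π s a = 0 → π' s a = 0)
    (f : S → ℝ) :
    Jret P ρ0 γ π' R - Jret P ρ0 γ π R ≥
      (1 / (1 - γ)) * (surrogateGain P ρ0 γ R f π π' -
        2 * (⨆ s, |bellmanResidual P γ R f π' s|) *
          ((1 / 2) * ∑ s, |dVisit P ρ0 γ π' s - dVisit P ρ0 γ π s|)) := by
  have one_sub_pos : 0 < 1 - γ := sub_pos.2 (abs_lt.1 hγ).2
  have identity := one_sub_mul_Jret_sub_Jret P ρ0 hγ R hac f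
  have shift_bound := (abs_le.1 (abs_sum_mul_le_iSup_abs_mul_sum_abs
    (fun s => dVisit P ρ0 γ π' s - dVisit P ρ0 γ π s) (bellmanResidual P γ R f π'))).1
  rw [ge_iff_le, one_div, inv_mul_le_iff₀ one_sub_pos, identity]
  linarith

/-- Appendix Lemma 3 (lower bound): `J_R(π') − J_R(π) ≥
(T_{π,f}(π') − 2 ε_f^{π'} D_TV(d^{π'}‖d^π)) / (1−γ)`. -/
theorem tace_appendix_lemma_three_lower
    {S A : Type*} [Fintype S] [Fintype A] [Nonempty S] [Nonempty A]
    (P : S → A → PMF S) (ρ0 : PMF S) (γ : ℝ) (hγ0 : 0 ≤ γ) (hγ1 : γ < 1)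
    (R : S → A → ℝ) (π π' : S → PMF A) (hπpos : ∀ s a, 0 < (π s a).toReal)
    (f : S → ℝ) :
    let Tf : ℝ := ∑ s : S, dVisit P ρ0 γ π s * ∑ a : A, (π s a).toReal *
        ∑ s' : S, (P s a s').toReal *
          (((π' s a).toReal / (π s a).toReal - 1) * (R s a + γ * f s' - f s))
    let εf : ℝ := ⨆ s : S,
      |∑ a : A, (π' s a).toReal * ∑ s' : S, (P s a s').toReal * (R s a + γ * f s' - f s)|
    let dTVd : ℝ := (1 / 2) * ∑ s : S, |dVisit P ρ0 γ π' s - dVisit P ρ0 γ π s|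
    Jret P ρ0 γ π' R - Jret P ρ0 γ π R ≥ (1 / (1 - γ)) * (Tf - 2 * εf * dTVd) :=
  tace_appendix_lemma_three_lower_general P ρ0 (abs_lt.2 ⟨by linarith, hγ1⟩) R π π'
    (fun s a h => absurd (hπpos s a) (by simp [h])) f
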